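/- arXiv:2605.28436 — 3 statements merged into one kernel-verified Lean document; each statement's English description precedes it below -/
import Mathlib

section
/- Assume t₁,…,t_m are not all equal, 𝔛 has at least two elements, m > 2 or |t₁ − t₂| ≠ ‖s₁ − s₂‖, and ‖u‖ = 1. Then for every (b,x) ∈ 𝔛 and every (t,s) ∈ 𝒮 the following are equivalent: (i) ‖s − x‖ = t − b; (ii) t ≥ b; (iii) ⟨u,v⟩ > α. Consequently, the (unsquared) global positioning equations ‖sᵢ − x‖ = tᵢ − b (i = 1,…,m) are solvable if and only if ⟨u,v⟩ > α, and in that case their solution set equals 𝔛. -/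
open scoped RealInnerProductSpace

/-!
Write an event as a pair (time, position). An event `p = (b, x)` solves the squared equations iff
`w = x - (v + b • u)` is orthogonal to the differences of the `sᵢ` and
`‖w‖² = β - ‖v‖² - 2b(⟪u, v⟫ - α)`; in particular `⟪u, x⟫ - b = ⟪u, v⟫`. As soon as `⟪u, v⟫ ≠ α`
and some solution has `w ≠ 0`, comparing it with its mirror image `-w` and with the vertex `w = 0`
of this paraboloid forces every `q = (t, s) ∈ 𝒮` onto the hyperplane `⟪u, s⟫ - t = α`. Hence
`⟪u, s - x⟫ = (t - b) - (⟪u, v⟫ - α)`, and Cauchy-Schwarz bounds this by `‖s - x‖ = |t - b|`, so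
`t - b` and `⟪u, v⟫ - α` have the same sign. If `⟪u, v⟫ = α`, the equality case puts all `sᵢ` on a
line with direction `u`, whence `‖sᵢ - sⱼ‖ = |tᵢ - tⱼ|`.
-/

theorem card_le_two_of_affineIndependent_of_collinear {k V P ι : Type*} [DivisionRing k]
    [AddCommGroup V] [Module k V] [AddTorsor V P] [Fintype ι] {p : ι → P}
    (hp : AffineIndependent k p) (hc : Collinear k (Set.range p)) : Fintype.card ι ≤ 2 :=
  hp.card_le_finrank_succ.trans (Nat.succ_le_succ hc.finrank_le_one)

theorem nonneg_iff_pos_of_abs_sub_le_abs {R : Type*} [CommRing R] [LinearOrder R]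
    [IsStrictOrderedRing R] {a c : R} (hc : c ≠ 0) (h : |a - c| ≤ |a|) : 0 ≤ a ↔ 0 < c := by
  have hsq : c * c ≤ 2 * (a * c) := by linarith [sq_le_sq.2 h]
  have hac : 0 < a * c := by linarith [mul_self_pos.2 hc]
  constructor
  · exact fun ha ↦ pos_of_mul_pos_right hac ha
  · exact fun hc ↦ (pos_of_mul_pos_left hac hc.le).le

section

variable {E : Type*} [NormedAddCommGroup E] [InnerProductSpace ℝ E]

theorem eq_inner_smul_of_norm_sq_eq {u x : E} (hu : ‖u‖ = 1) (h : ‖x‖ ^ 2 = ⟪u, x⟫ ^ 2) :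
    x = ⟪u, x⟫ • u := by
  have hdist : ‖x - ⟪u, x⟫ • u‖ ^ 2 = 0 := by
    rw [norm_sub_sq_real, real_inner_smul_right, real_inner_comm u x, norm_smul, hu, mul_one,
      Real.norm_eq_abs, sq_abs]
    linarith
  exact sub_eq_zero.1 (norm_eq_zero.1 (pow_eq_zero_iff two_ne_zero |>.1 hdist))

theorem collinear_of_norm_sub_eq_abs_inner {u : E} (hu : ‖u‖ = 1) {A : Set E}
    (h : ∀ x ∈ A, ∀ y ∈ A, ‖x - y‖ = |⟪u, x - y⟫|) : Collinear ℝ A := by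
  obtain rfl | ⟨y, hy⟩ := A.eq_empty_or_nonempty
  · exact collinear_empty ℝ E
  · refine (collinear_iff_of_mem hy).2 ⟨u, fun x hx ↦ ⟨⟪u, x - y⟫, ?_⟩⟩
    rw [vadd_eq_add, ← sub_eq_iff_eq_add]
    exact eq_inner_smul_of_norm_sq_eq hu (by rw [h x hx y hy, sq_abs])

theorem forall_inner_eq_iff_of_mem_affineSpan {A : Set E} {v w : E} {c : ℝ}
    (hv : v ∈ affineSpan ℝ A) :
    (∀ x ∈ A, ⟪x, w⟫ = c) ↔ w ∈ (vectorSpan ℝ A)ᗮ ∧ ⟪v, w⟫ = c := by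
  have inner_eq (hw : w ∈ (vectorSpan ℝ A)ᗮ) {x : E} (hx : x ∈ A) : ⟪x, w⟫ = ⟪v, w⟫ := by
    rw [← sub_eq_zero, ← inner_sub_left]
    exact hw _ (vsub_mem_vectorSpan_of_mem_affineSpan_of_mem_affineSpan
      (subset_affineSpan ℝ A hx) hv)
  constructor
  · intro h
    have hle : vectorSpan ℝ A ≤ (ℝ ∙ w)ᗮ := by
      rw [vectorSpan_def, Submodule.span_le]
      rintro _ ⟨x, hx, y, hy, rfl⟩
      refine Submodule.mem_orthogonal_singleton_iff_inner_left.2 ?_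
      change ⟪x - y, w⟫ = 0
      rw [inner_sub_left, h x hx, h y hy, sub_self]
    have hw : w ∈ (vectorSpan ℝ A)ᗮ := fun y hy ↦
      Submodule.mem_orthogonal_singleton_iff_inner_left.1 (hle hy)
    obtain ⟨x, hx⟩ := (affineSpan_nonempty ℝ).1 ⟨v, hv⟩
    exact ⟨hw, (inner_eq hw hx).symm.trans (h x hx)⟩
  · rintro ⟨hw, hvw⟩ x hx
    exact (inner_eq hw hx).trans hvw

theorem norm_sub_smul_add_sq_eq_sq_iff {u w : E} (hu : ‖u‖ = 1) (huw : ⟪u, w⟫ = 0) (y : E)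
    (r b : ℝ) :
    ‖y - (b • u + w)‖ ^ 2 = (r - b) ^ 2 ↔
      ‖y‖ ^ 2 - r ^ 2 + ‖w‖ ^ 2 = 2 * (b * (⟪u, y⟫ - r) + ⟪w, y⟫) := by
  have hexpand : ‖y - (b • u + w)‖ ^ 2 =
      ‖y‖ ^ 2 + b ^ 2 + ‖w‖ ^ 2 - 2 * (b * ⟪u, y⟫ + ⟪w, y⟫) := by
    rw [norm_sub_sq_real, norm_add_sq_real, norm_smul, hu, mul_one, Real.norm_eq_abs, sq_abs,
      real_inner_comm, inner_add_left, real_inner_smul_left, real_inner_smul_left, huw]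
    ring
  rw [hexpand]
  constructor <;> intro h <;> linear_combination h

end

namespace GlobalPositioning

section

variable {ι E : Type*} [SeminormedAddCommGroup E] {s : ι → E} {t : ι → ℝ} {p q : ℝ × E}

/-- The solution set of the global positioning equations, as pairs (time, position). -/
def solutions (s : ι → E) (t : ι → ℝ) : Set (ℝ × E) :=
  {p | ∀ i, ‖s i - p.2‖ = t i - p.1}

/-- The solution set `𝔛` of the squared global positioning equations, as pairs (time, position). -/
def squaredSolutions (s : ι → E) (t : ι → ℝ) : Set (ℝ × E) :=
  {p | ∀ i, ‖s i - p.2‖ ^ 2 = (t i - p.1) ^ 2}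

/-- The events lying on the light cone of every event of `X`; it is the set `𝒮` when `X` is the set
of squared solutions. -/
def lightConeLocus (X : Set (ℝ × E)) : Set (ℝ × E) :=
  {q | ∀ p ∈ X, ‖q.2 - p.2‖ ^ 2 = (q.1 - p.1) ^ 2}

theorem solutions_subset_squaredSolutions : solutions s t ⊆ squaredSolutions s t :=
  fun _ hp i ↦ congrArg (· ^ 2) (hp i)

theorem mem_lightConeLocus_squaredSolutions (i : ι) :
    (t i, s i) ∈ lightConeLocus (squaredSolutions s t) :=
  fun _ hp ↦ hp i

theorem norm_eq_sub_iff_le {X : Set (ℝ × E)} (hp : p ∈ X) (hq : q ∈ lightConeLocus X) :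
    ‖q.2 - p.2‖ = q.1 - p.1 ↔ p.1 ≤ q.1 := by
  rw [← sub_nonneg (a := q.1)]
  exact ⟨fun h ↦ h ▸ norm_nonneg _, fun h ↦ (sq_eq_sq₀ (norm_nonneg _) h).1 (hq p hp)⟩

end

variable {ι E : Type*} [NormedAddCommGroup E] [InnerProductSpace ℝ E] {s : ι → E} {t : ι → ℝ}
  {u v : E} {α β : ℝ} {p q : ℝ × E}

/-- The affine functions `⟪u, ·⟫ - α` and `2 * ⟪·, v⟫ - β` take the values `tᵢ` and `‖sᵢ‖² - tᵢ²` at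
the points `sᵢ`, with `u` and `v` normalized to lie in the linear span of the differences of
these points and in their affine span. -/
structure IsInterpolation (s : ι → E) (t : ι → ℝ) (u : E) (α : ℝ) (v : E) (β : ℝ) : Prop where
  mem_vectorSpan : u ∈ vectorSpan ℝ (Set.range s)
  inner_sub_eq : ∀ i, ⟪u, s i⟫ - α = t i
  mem_affineSpan : v ∈ affineSpan ℝ (Set.range s)
  two_mul_inner_sub_eq : ∀ i, 2 * ⟪s i, v⟫ - β = ‖s i‖ ^ 2 - t i ^ 2

namespace IsInterpolation

theorem inner_eq_zero (h : IsInterpolation s t u α v β) {w : E}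
    (hw : w ∈ (vectorSpan ℝ (Set.range s))ᗮ) : ⟪u, w⟫ = 0 :=
  hw u h.mem_vectorSpan

theorem mem_squaredSolutions_iff_forall_inner_eq (h : IsInterpolation s t u α v β) :
    p ∈ squaredSolutions s t ↔ ∀ x ∈ Set.range s,
      ⟪x, p.2 - (v + p.1 • u)⟫ = (‖p.2‖ ^ 2 - p.1 ^ 2 - β - 2 * p.1 * α) / 2 := by
  rw [Set.forall_mem_range]
  refine forall_congr' fun i ↦ ?_
  rw [norm_sub_sq_real, inner_sub_right, inner_add_right, real_inner_smul_right,
    real_inner_comm u (s i)]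
  have ht := h.inner_sub_eq i
  have hsq := h.two_mul_inner_sub_eq i
  constructor <;> intro hi
  · linear_combination (-1 / 2) * hi - (1 / 2) * hsq - p.1 * ht
  · linear_combination (-2) * hi - hsq - 2 * p.1 * ht

theorem mem_squaredSolutions_iff (h : IsInterpolation s t u α v β) (hu : ‖u‖ = 1) :
    p ∈ squaredSolutions s t ↔
      p.2 - (v + p.1 • u) ∈ (vectorSpan ℝ (Set.range s))ᗮ ∧
        ‖p.2 - (v + p.1 • u)‖ ^ 2 = β - ‖v‖ ^ 2 - 2 * p.1 * (⟪u, v⟫ - α) := by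
  rw [h.mem_squaredSolutions_iff_forall_inner_eq,
    forall_inner_eq_iff_of_mem_affineSpan h.mem_affineSpan]
  refine and_congr_right fun hw ↦ ?_
  obtain ⟨w, hx⟩ : ∃ w, p.2 = v + p.1 • u + w := ⟨p.2 - (v + p.1 • u), by abel⟩
  rw [hx, add_sub_cancel_left] at hw ⊢
  have hnorm : ‖v + p.1 • u + w‖ ^ 2 =
      ‖v‖ ^ 2 + p.1 ^ 2 + ‖w‖ ^ 2 + 2 * (p.1 * ⟪u, v⟫ + ⟪v, w⟫) := by
    rw [norm_add_sq_real, norm_add_sq_real, norm_smul, hu, mul_one, Real.norm_eq_abs, sq_abs,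
      inner_add_left, real_inner_smul_left, real_inner_smul_right, h.inner_eq_zero hw,
      real_inner_comm u v]
    ring
  rw [hnorm]
  constructor <;> intro hc <;> linarith

theorem mk_mem_squaredSolutions_iff (h : IsInterpolation s t u α v β) (hu : ‖u‖ = 1) {b : ℝ}
    {w : E} :
    (b, v + b • u + w) ∈ squaredSolutions s t ↔
      w ∈ (vectorSpan ℝ (Set.range s))ᗮ ∧
        ‖w‖ ^ 2 = β - ‖v‖ ^ 2 - 2 * b * (⟪u, v⟫ - α) := by
  rw [h.mem_squaredSolutions_iff hu, add_sub_cancel_left]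

theorem inner_sub_eq_of_mem_squaredSolutions (h : IsInterpolation s t u α v β) (hu : ‖u‖ = 1)
    (hp : p ∈ squaredSolutions s t) : ⟪u, p.2⟫ - p.1 = ⟪u, v⟫ := by
  have horth := h.inner_eq_zero ((h.mem_squaredSolutions_iff hu).1 hp).1
  rw [inner_sub_right, inner_add_right, real_inner_smul_right, real_inner_self_eq_norm_sq, hu]
    at horth
  linarith

theorem norm_sub_eq_abs_sub_of_inner_eq (h : IsInterpolation s t u α v β) (hu : ‖u‖ = 1)
    (hX : (squaredSolutions s t).Nonempty) (huv : ⟪u, v⟫ = α) (i j : ι) :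
    ‖s i - s j‖ = |t i - t j| := by
  obtain ⟨p, hp⟩ := hX
  have hline (k : ι) : s k - p.2 = (t k - p.1) • u := by
    have hinner : ⟪u, s k - p.2⟫ = t k - p.1 := by
      rw [inner_sub_right]
      linarith [h.inner_sub_eq k, h.inner_sub_eq_of_mem_squaredSolutions hu hp]
    rw [← hinner]
    exact eq_inner_smul_of_norm_sq_eq hu (by rw [hinner, hp k])
  have hdiff : s i - s j = (t i - t j) • u := by
    rw [← sub_sub_sub_cancel_right (s i) (s j) p.2, hline, hline, ← sub_smul,
      sub_sub_sub_cancel_right]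
  rw [hdiff, norm_smul, hu, mul_one, Real.norm_eq_abs]

theorem exists_mem_squaredSolutions_ne (h : IsInterpolation s t u α v β) (hu : ‖u‖ = 1)
    (huv : ⟪u, v⟫ ≠ α) (hX : (squaredSolutions s t).Nontrivial) :
    ∃ p ∈ squaredSolutions s t, p.2 ≠ v + p.1 • u := by
  by_contra! hvertex
  obtain ⟨p, hp, q, hq, hpq⟩ := hX
  have time_mul {r : ℝ × E} (hr : r ∈ squaredSolutions s t) :
      2 * r.1 * (⟪u, v⟫ - α) = β - ‖v‖ ^ 2 := by
    have hnorm := ((h.mem_squaredSolutions_iff hu).1 hr).2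
    rw [← hvertex r hr, sub_self, norm_zero] at hnorm
    linarith
  have htime : p.1 = q.1 :=
    mul_right_cancel₀ (sub_ne_zero.2 huv) (by linarith [time_mul hp, time_mul hq])
  exact hpq (Prod.ext htime (by rw [hvertex p hp, hvertex q hq, htime]))

theorem inner_sub_eq_of_mem_lightConeLocus (h : IsInterpolation s t u α v β) (hu : ‖u‖ = 1)
    (huv : ⟪u, v⟫ ≠ α) (hX : (squaredSolutions s t).Nontrivial)
    (hq : q ∈ lightConeLocus (squaredSolutions s t)) : ⟪u, q.2⟫ - q.1 = α := by
  obtain ⟨⟨b, x⟩, hp, hne⟩ := h.exists_mem_squaredSolutions_ne hu huv hX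
  obtain ⟨w, rfl⟩ : ∃ w, x = v + b • u + w := ⟨x - (v + b • u), by abel⟩
  have hw : w ≠ 0 := by simpa using hne
  obtain ⟨hw_orth, hw_norm⟩ := (h.mk_mem_squaredSolutions_iff hu).1 hp
  have cone {c : ℝ} {z : E} (hz : z ∈ (vectorSpan ℝ (Set.range s))ᗮ)
      (hz_norm : ‖z‖ ^ 2 = β - ‖v‖ ^ 2 - 2 * c * (⟪u, v⟫ - α)) :
      ‖q.2 - v‖ ^ 2 - q.1 ^ 2 + ‖z‖ ^ 2 =
        2 * (c * (⟪u, q.2 - v⟫ - q.1) + ⟪z, q.2 - v⟫) := by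
    rw [← norm_sub_smul_add_sq_eq_sq_iff hu (h.inner_eq_zero hz), sub_sub, ← add_assoc]
    exact hq _ ((h.mk_mem_squaredSolutions_iff hu).2 ⟨hz, hz_norm⟩)
  have hγ : ⟪u, v⟫ - α ≠ 0 := sub_ne_zero.2 huv
  -- `d` is the time from the solution `(b, v + b • u + w)` to the vertex of the paraboloid.
  obtain ⟨d, hd⟩ : ∃ d, ‖w‖ ^ 2 = 2 * d * (⟪u, v⟫ - α) :=
    ⟨‖w‖ ^ 2 / (2 * (⟪u, v⟫ - α)), by field_simp⟩
  have hd_ne : d ≠ 0 := by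
    rintro rfl
    simp [hw] at hd
  have at_point := cone hw_orth hw_norm
  have at_mirror := cone (neg_mem hw_orth) (by rwa [norm_neg])
  have at_vertex := cone (c := b + d) (Submodule.zero_mem _) (by rw [norm_zero]; linarith)
  rw [inner_neg_left, norm_neg] at at_mirror
  rw [inner_zero_left, norm_zero] at at_vertex
  rw [inner_sub_right u] at at_point at_mirror at_vertex
  refine mul_left_cancel₀ hd_ne ?_
  linear_combination (1 / 4) * at_point + (1 / 4) * at_mirror - (1 / 2) * at_vertex - (1 / 2) * hd

theorem le_iff_lt_inner (h : IsInterpolation s t u α v β) (hu : ‖u‖ = 1) (huv : ⟪u, v⟫ ≠ α)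
    (hX : (squaredSolutions s t).Nontrivial) (hp : p ∈ squaredSolutions s t)
    (hq : q ∈ lightConeLocus (squaredSolutions s t)) : p.1 ≤ q.1 ↔ α < ⟪u, v⟫ := by
  have hinner : ⟪u, q.2 - p.2⟫ = (q.1 - p.1) - (⟪u, v⟫ - α) := by
    rw [inner_sub_right]
    linarith [h.inner_sub_eq_of_mem_squaredSolutions hu hp,
      h.inner_sub_eq_of_mem_lightConeLocus hu huv hX hq]
  have hbound : |(q.1 - p.1) - (⟪u, v⟫ - α)| ≤ |q.1 - p.1| :=
    calc |(q.1 - p.1) - (⟪u, v⟫ - α)| = |⟪u, q.2 - p.2⟫| := by rw [hinner]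
      _ ≤ ‖u‖ * ‖q.2 - p.2‖ := abs_real_inner_le_norm _ _
      _ = ‖q.2 - p.2‖ := by rw [hu, one_mul]
      _ = |q.1 - p.1| := by rw [← abs_norm, sq_eq_sq_iff_abs_eq_abs _ _ |>.1 (hq p hp)]
  rw [← sub_nonneg, ← sub_pos (b := α)]
  exact nonneg_iff_pos_of_abs_sub_le_abs (sub_ne_zero.2 huv) hbound

theorem exists_abs_sub_ne_norm_sub [Fintype ι] (h : IsInterpolation s t u α v β) (hu : ‖u‖ = 1)
    (hs : AffineIndependent ℝ s) (hcard : 2 < Fintype.card ι) :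
    ∃ i j, |t i - t j| ≠ ‖s i - s j‖ := by
  by_contra! hdist
  have hcol : Collinear ℝ (Set.range s) := by
    apply collinear_of_norm_sub_eq_abs_inner hu
    rintro _ ⟨i, rfl⟩ _ ⟨j, rfl⟩
    rw [← hdist, ← h.inner_sub_eq, ← h.inner_sub_eq, sub_sub_sub_cancel_right, inner_sub_right]
  exact hcard.not_ge (card_le_two_of_affineIndependent_of_collinear hs hcol)

end IsInterpolation

end GlobalPositioning

open GlobalPositioning

theorem stmt_14_general {ι E : Type*} [NormedAddCommGroup E] [InnerProductSpace ℝ E]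
    {s : ι → E} {t : ι → ℝ} {u v : E} {α β : ℝ}
    (h : IsInterpolation s t u α v β) (hu : ‖u‖ = 1) (hX : (squaredSolutions s t).Nontrivial)
    (hst : ∃ i j, |t i - t j| ≠ ‖s i - s j‖) :
    (∀ p ∈ squaredSolutions s t, ∀ q ∈ lightConeLocus (squaredSolutions s t),
      (‖q.2 - p.2‖ = q.1 - p.1 ↔ p.1 ≤ q.1) ∧ (p.1 ≤ q.1 ↔ α < ⟪u, v⟫)) ∧
    ((solutions s t).Nonempty ↔ α < ⟪u, v⟫) ∧
    (α < ⟪u, v⟫ → solutions s t = squaredSolutions s t) := by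
  obtain ⟨i, j, hij⟩ := hst
  have huv : ⟪u, v⟫ ≠ α := fun huv ↦
    hij (h.norm_sub_eq_abs_sub_of_inner_eq hu hX.nonempty huv i j).symm
  have sign_iff {p q} (hp : p ∈ squaredSolutions s t)
      (hq : q ∈ lightConeLocus (squaredSolutions s t)) : p.1 ≤ q.1 ↔ α < ⟪u, v⟫ :=
    h.le_iff_lt_inner hu huv hX hp hq
  have solves (hα : α < ⟪u, v⟫) : squaredSolutions s t ⊆ solutions s t := fun p hp k ↦
    (norm_eq_sub_iff_le hp (mem_lightConeLocus_squaredSolutions k)).2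
      ((sign_iff hp (mem_lightConeLocus_squaredSolutions k)).2 hα)
  refine ⟨fun p hp q hq ↦ ⟨norm_eq_sub_iff_le hp hq, sign_iff hp hq⟩,
    ⟨?_, fun hα ↦ hX.nonempty.mono (solves hα)⟩,
    fun hα ↦ solutions_subset_squaredSolutions.antisymm (solves hα)⟩
  rintro ⟨p, hp⟩
  have hp_sq := solutions_subset_squaredSolutions hp
  have hi := mem_lightConeLocus_squaredSolutions (s := s) (t := t) i
  exact (sign_iff hp_sq hi).1 ((norm_eq_sub_iff_le hp_sq hi).1 (hp i))

theorem stmt_14 {n m : ℕ} [NeZero m] (hn : 1 ≤ n) (hm : m ≤ n + 1)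
    (s : Fin m → EuclideanSpace ℝ (Fin n)) (t : Fin m → ℝ)
    (hindep : AffineIndependent ℝ s)
    (u v : EuclideanSpace ℝ (Fin n)) (α β : ℝ)
    (hu : u ∈ Submodule.span ℝ (Set.range fun i => s i - s 0))
    (hα : ∀ i, ⟪u, s i⟫ - α = t i)
    (hv : v ∈ affineSpan ℝ (Set.range s))
    (hβ : ∀ i, 2 * ⟪s i, v⟫ - β = ‖s i‖ ^ 2 - t i ^ 2)
    (X : Set (ℝ × EuclideanSpace ℝ (Fin n)))
    (hX : X = {p : ℝ × EuclideanSpace ℝ (Fin n) | ∀ i, ‖s i - p.2‖ ^ 2 = (t i - p.1) ^ 2})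
    (S : Set (ℝ × EuclideanSpace ℝ (Fin n)))
    (hS : S = {q : ℝ × EuclideanSpace ℝ (Fin n) | ∀ p ∈ X, ‖q.2 - p.2‖ ^ 2 = (q.1 - p.1) ^ 2})
    (htne : ∃ i j : Fin m, t i ≠ t j)
    (hX2 : X.Nontrivial)
    (hcase : 2 < m ∨ ∀ i j : Fin m, i ≠ j → |t i - t j| ≠ ‖s i - s j‖)
    (heq : ‖u‖ = 1) :
    (∀ p ∈ X, ∀ q ∈ S,
      ((‖q.2 - p.2‖ = q.1 - p.1) ↔ p.1 ≤ q.1) ∧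
      ((p.1 ≤ q.1) ↔ α < ⟪u, v⟫)) ∧
    ((∃ p : ℝ × EuclideanSpace ℝ (Fin n), ∀ i, ‖s i - p.2‖ = t i - p.1) ↔ α < ⟪u, v⟫) ∧
    (α < ⟪u, v⟫ →
      {p : ℝ × EuclideanSpace ℝ (Fin n) | ∀ i, ‖s i - p.2‖ = t i - p.1} = X) := by
  subst hX hS
  have h : IsInterpolation s t u α v β :=
    ⟨by rwa [vectorSpan_range_eq_span_range_vsub_right ℝ s 0], hα, hv, hβ⟩
  have hst : ∃ i j, |t i - t j| ≠ ‖s i - s j‖ := hcase.elim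
    (fun hm₂ ↦ h.exists_abs_sub_ne_norm_sub heq hindep (by rwa [Fintype.card_fin]))
    fun hne ↦ htne.imp fun i ↦ Exists.imp fun j hij ↦ hne i j (ne_of_apply_ne t hij)
  exact stmt_14_general h heq hX2 hst
end

section
/- The solution set of the squared global positioning equations is exactly 𝔛 = {(b₀, v + y) : y ∈ U⊥ with ‖y‖² = β − ‖v‖²}. In particular, every solution has bias b = b₀. -/
open scoped RealInnerProductSpace

/-! Subtracting the linear relations satisfied by `b₀`, `v`, `β` from the squared equations cancels
the quadratic terms `‖sᵢ‖²` and `tᵢ²`: a solution `(b, v + y)` satisfies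
`2 (b - b₀) tᵢ = 2 ⟪y, sᵢ⟫ + const`. If `b ≠ b₀`, this makes `tᵢ` an affine function of `sᵢ`, so
that any affine dependence of the `sᵢ` lifts to the `(tᵢ, sᵢ)`. If `b = b₀`, it says that
`⟪y, sᵢ⟫` does not depend on `i`; the common value is then `⟪y, v⟫`, as `v` lies in the affine span
of the `sᵢ`, and the constant term fixes `‖y‖`. -/

theorem not_exists_affineMap_of_affineIndependent_prodMk {k V W P Q ι : Type*} [Ring k]
    [AddCommGroup V] [Module k V] [AddTorsor V P] [AddCommGroup W] [Module k W] [AddTorsor W Q]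
    {p : ι → P} {q : ι → Q} (hqp : AffineIndependent k fun i => (q i, p i))
    (hp : ¬ AffineIndependent k p) : ¬ ∃ f : P →ᵃ[k] Q, ∀ i, q i = f (p i) := by
  rintro ⟨f, hf⟩
  have hgraph : (fun i => (q i, p i)) = f.prod (AffineMap.id k P) ∘ p :=
    funext fun i => Prod.ext (hf i) rfl
  exact hp (AffineIndependent.of_comp (f.prod (AffineMap.id k P)) (hgraph ▸ hqp))

section AffineSpan

variable {𝕜 E : Type*} [RCLike 𝕜] [NormedAddCommGroup E] [InnerProductSpace 𝕜 E]
  {S : Set E} {v y : E} {c : 𝕜}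

theorem inner_eq_of_mem_affineSpan (hv : v ∈ affineSpan 𝕜 S) (hS : ∀ p ∈ S, inner 𝕜 y p = c) :
    inner 𝕜 y v = c :=
  AffineMap.eqOn_affineSpan (f := (innerₛₗ 𝕜 y).toAffineMap) (g := AffineMap.const 𝕜 E c) hS hv

theorem forall_inner_eq_iff_mem_orthogonal_vectorSpan (hv : v ∈ affineSpan 𝕜 S) :
    (∀ p ∈ S, inner 𝕜 y p = c) ↔ y ∈ (vectorSpan 𝕜 S)ᗮ ∧ inner 𝕜 y v = c := by
  rw [Submodule.mem_orthogonal']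
  constructor
  · intro hS
    refine ⟨fun u hu => ?_, inner_eq_of_mem_affineSpan hv hS⟩
    rw [← direction_affineSpan, AffineSubspace.mem_direction_iff_eq_vsub ⟨v, hv⟩] at hu
    obtain ⟨p, hp, q, hq, rfl⟩ := hu
    rw [vsub_eq_sub, inner_sub_right, inner_eq_of_mem_affineSpan hp hS,
      inner_eq_of_mem_affineSpan hq hS, sub_self]
  · rintro ⟨hy, rfl⟩ p hp
    have hpv : p - v ∈ vectorSpan 𝕜 S :=
      vsub_mem_vectorSpan_of_mem_affineSpan_of_mem_affineSpan (mem_affineSpan 𝕜 hp) hv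
    rw [← sub_eq_zero, ← inner_sub_right]
    exact hy _ hpv

end AffineSpan

section GlobalPositioning

variable {E ι : Type*} [NormedAddCommGroup E] [InnerProductSpace ℝ E]

theorem norm_sub_add_sq_eq_sq_sub_iff {s v : E} {t b₀ β : ℝ}
    (hβ : 2 * ⟪s, v⟫ - β = ‖s‖ ^ 2 - (t - b₀) ^ 2) (b : ℝ) (y : E) :
    ‖s - (v + y)‖ ^ 2 = (t - b) ^ 2 ↔
      2 * (b - b₀) * t = 2 * ⟪y, s⟫ + (β - ‖v + y‖ ^ 2 + b ^ 2 - b₀ ^ 2) := by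
  rw [norm_sub_sq_real, inner_add_right, real_inner_comm s y]
  constructor <;> intro h <;> linarith

/-- The solution set, as pairs `(b, x)`, of the squared global positioning equations with
emission points `s i` and emission times `t i`: a bias `b` and a receiver position `x`. -/
def squaredGPSSolutions (s : ι → E) (t : ι → ℝ) : Set (ℝ × E) :=
  {p | ∀ i, ‖s i - p.2‖ ^ 2 = (t i - p.1) ^ 2}

namespace squaredGPSSolutions

variable {s : ι → E} {t : ι → ℝ} {b₀ β : ℝ} {v : E}

theorem fst_eq (ht : ¬ ∃ f : E →ᵃ[ℝ] ℝ, ∀ i, t i = f (s i))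
    (hβ : ∀ i, 2 * ⟪s i, v⟫ - β = ‖s i‖ ^ 2 - (t i - b₀) ^ 2)
    {p : ℝ × E} (hp : p ∈ squaredGPSSolutions s t) : p.1 = b₀ := by
  obtain ⟨b, x⟩ := p
  obtain ⟨y, rfl⟩ : ∃ y, x = v + y := ⟨x - v, (add_sub_cancel v x).symm⟩
  by_contra hb
  have hb' : 2 * (b - b₀) ≠ 0 := mul_ne_zero two_ne_zero (sub_ne_zero.mpr hb)
  refine ht ⟨(2 * (b - b₀))⁻¹ • ((2 : ℝ) • (innerₛₗ ℝ y).toAffineMap +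
    AffineMap.const ℝ E (β - ‖v + y‖ ^ 2 + b ^ 2 - b₀ ^ 2)), fun i => ?_⟩
  exact (eq_inv_mul_iff_mul_eq₀ hb').mpr ((norm_sub_add_sq_eq_sq_sub_iff (hβ i) b y).mp (hp i))

theorem mk_add_mem_iff (hv : v ∈ affineSpan ℝ (Set.range s))
    (hβ : ∀ i, 2 * ⟪s i, v⟫ - β = ‖s i‖ ^ 2 - (t i - b₀) ^ 2) (y : E) :
    (b₀, v + y) ∈ squaredGPSSolutions s t ↔
      y ∈ (vectorSpan ℝ (Set.range s))ᗮ ∧ ‖y‖ ^ 2 = β - ‖v‖ ^ 2 := by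
  calc (b₀, v + y) ∈ squaredGPSSolutions s t
      ↔ ∀ p ∈ Set.range s, ⟪y, p⟫ = (‖v + y‖ ^ 2 - β) / 2 := by
        rw [Set.forall_mem_range]
        refine forall_congr' fun i => (norm_sub_add_sq_eq_sq_sub_iff (hβ i) b₀ y).trans ?_
        constructor <;> intro h <;> linarith
    _ ↔ y ∈ (vectorSpan ℝ (Set.range s))ᗮ ∧ ⟪y, v⟫ = (‖v + y‖ ^ 2 - β) / 2 :=
        forall_inner_eq_iff_mem_orthogonal_vectorSpan hv
    _ ↔ y ∈ (vectorSpan ℝ (Set.range s))ᗮ ∧ ‖y‖ ^ 2 = β - ‖v‖ ^ 2 := by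
        rw [norm_add_sq_real, real_inner_comm]
        refine and_congr_right fun _ => ?_
        constructor <;> intro h <;> linarith

end squaredGPSSolutions

theorem stmt_15_general {s : ι → E} {t : ι → ℝ} (ht : ¬ ∃ f : E →ᵃ[ℝ] ℝ, ∀ i, t i = f (s i))
    {b₀ β : ℝ} {v : E} (hv : v ∈ affineSpan ℝ (Set.range s))
    (hβ : ∀ i, 2 * ⟪s i, v⟫ - β = ‖s i‖ ^ 2 - (t i - b₀) ^ 2) :
    squaredGPSSolutions s t = {p : ℝ × E | ∃ y : E,
        y ∈ (vectorSpan ℝ (Set.range s))ᗮ ∧ ‖y‖ ^ 2 = β - ‖v‖ ^ 2 ∧ p = (b₀, v + y)} ∧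
    ∀ p ∈ squaredGPSSolutions s t, p.1 = b₀ := by
  refine ⟨Set.ext fun p => ⟨fun hp => ?_, ?_⟩, fun p => squaredGPSSolutions.fst_eq ht hβ⟩
  · have hpy : p = (b₀, v + (p.2 - v)) :=
      Prod.ext (squaredGPSSolutions.fst_eq ht hβ hp) (add_sub_cancel v p.2).symm
    have ⟨horth, hnorm⟩ := (squaredGPSSolutions.mk_add_mem_iff hv hβ _).mp (hpy ▸ hp)
    exact ⟨p.2 - v, horth, hnorm, hpy⟩
  · rintro ⟨y, horth, hnorm, rfl⟩
    exact (squaredGPSSolutions.mk_add_mem_iff hv hβ y).mpr ⟨horth, hnorm⟩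

end GlobalPositioning

theorem stmt_15 {n m : ℕ} [NeZero m] (hn : 1 ≤ n)
    (s : Fin m → EuclideanSpace ℝ (Fin n)) (t : Fin m → ℝ)
    (hindep : AffineIndependent ℝ (fun i => ((t i, s i) : ℝ × EuclideanSpace ℝ (Fin n))))
    (hnindep : ¬ AffineIndependent ℝ s)
    (b₀ : ℝ) (v : EuclideanSpace ℝ (Fin n)) (β : ℝ)
    (hv : v ∈ affineSpan ℝ (Set.range s))
    (hβ : ∀ i, 2 * ⟪s i, v⟫ - β = ‖s i‖ ^ 2 - (t i - b₀) ^ 2)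
    (X : Set (ℝ × EuclideanSpace ℝ (Fin n)))
    (hX : X = {p : ℝ × EuclideanSpace ℝ (Fin n) | ∀ i, ‖s i - p.2‖ ^ 2 = (t i - p.1) ^ 2}) :
    X = {p : ℝ × EuclideanSpace ℝ (Fin n) | ∃ y : EuclideanSpace ℝ (Fin n),
        y ∈ (Submodule.span ℝ (Set.range fun i => s i - s 0))ᗮ ∧
        ‖y‖ ^ 2 = β - ‖v‖ ^ 2 ∧ p = (b₀, v + y)} ∧
    ∀ p ∈ X, p.1 = b₀ := by
  obtain rfl : X = squaredGPSSolutions s t := hX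
  exact vectorSpan_range_eq_span_range_vsub_right ℝ s 0 ▸
    stmt_15_general (not_exists_affineMap_of_affineIndependent_prodMk hindep hnindep) hv hβ
end

section
/- Suppose m ≥ 2 and all pseudoranges are equal: tᵢ = τ for all i. Set r = √(‖v‖² − β + τ²). Then: (1) ‖v‖² − β + τ² ≥ 0 and ‖sᵢ − v‖ = r for all i (the satellites lie on a sphere of radius r around v); (2) 𝔛 = {(b, v + y) : y ∈ U⊥ and b = τ + √(r² + ‖y‖²) or b = τ − √(r² + ‖y‖²)}, so that Q_sol = v + U⊥; and (3) 𝒮 = {(τ, s) : s lies in the affine span of s₁,…,s_m and ‖s − v‖ = r}, so that Q_sat is the sphere of radius r around v inside the affine span of s₁,…,s_m. -/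
open scoped RealInnerProductSpace

/-!
Call two space-time events null related when the square of their distance in space equals the
square of their difference in time. Then `𝔛` is the set of events null related to every
`(tᵢ, sᵢ)`, and `𝒮` arises from `𝔛` in the same way. If all `tᵢ` equal `τ`, a solution `(b, x)`
has `x` equidistant from the `sᵢ`, as `v` is, so `x - v` is orthogonal to their affine span, and
Pythagoras turns the equations into `(b - τ)² = r² + ‖x - v‖²`, a hyperboloid over `v + U⊥`.
This hyperboloid is symmetric under the time reflection `b ↦ 2τ - b`, which forces every event
null related to all of it to happen at time `τ`; evaluating at `x = v` then gives the distance `r`,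
and the remaining points give orthogonality to `U⊥`.
-/

open Set Metric Submodule

section NullPolar

variable {P : Type*} [PseudoMetricSpace P]

/-- The events `(time, position)` null related to every event of `A`: their squared distance in
space is the square of their difference in time (signal speed `1`). The solution set of the
squared positioning equations is the null polar of the data `(tᵢ, sᵢ)`, and the set of data
compatible with all solutions is its second null polar. -/
def nullPolar (A : Set (ℝ × P)) : Set (ℝ × P) :=
  {q | ∀ p ∈ A, dist q.2 p.2 ^ 2 = (q.1 - p.1) ^ 2}

theorem mem_nullPolar_singleton_prod {A : Set P} {τ : ℝ} {q : ℝ × P} :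
    q ∈ nullPolar ({τ} ×ˢ A) ↔ ∀ p ∈ A, dist q.2 p ^ 2 = (q.1 - τ) ^ 2 := by
  constructor
  · exact fun h p hp ↦ h (τ, p) ⟨rfl, hp⟩
  · rintro h ⟨_, p⟩ ⟨rfl, hp⟩
    exact h p hp

end NullPolar

variable {V P : Type*} [NormedAddCommGroup V] [InnerProductSpace ℝ V] [MetricSpace P]
  [NormedAddTorsor V P]

section Orthogonality

theorem dist_sq_eq_dist_sq_add_dist_sq_sub_two_mul_inner (p x v : P) :
    dist p x ^ 2 = dist p v ^ 2 + dist x v ^ 2 - 2 * ⟪p -ᵥ v, x -ᵥ v⟫ := by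
  rw [dist_eq_norm_vsub V p x, ← vsub_sub_vsub_cancel_right p x v, norm_sub_sq_real,
    ← dist_eq_norm_vsub, ← dist_eq_norm_vsub]
  ring

theorem dist_sq_eq_dist_sq_add_dist_sq_of_mem_orthogonal {W : Submodule ℝ V} {p x v : P}
    (hp : p -ᵥ v ∈ W) (hx : x -ᵥ v ∈ Wᗮ) : dist p x ^ 2 = dist p v ^ 2 + dist x v ^ 2 := by
  rw [dist_sq_eq_dist_sq_add_dist_sq_sub_two_mul_inner p x v, inner_right_of_mem_orthogonal hp hx,
    mul_zero, sub_zero]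

theorem vsub_mem_orthogonal_vectorSpan_of_subset_sphere {A : Set P} {c₁ c₂ : P} {r₁ r₂ : ℝ}
    (h₁ : A ⊆ sphere c₁ r₁) (h₂ : A ⊆ sphere c₂ r₂) : c₂ -ᵥ c₁ ∈ (vectorSpan ℝ A)ᗮ := by
  suffices vectorSpan ℝ A ≤ (ℝ ∙ (c₂ -ᵥ c₁))ᗮ from
    fun u hu ↦ mem_orthogonal_singleton_iff_inner_left.1 (this hu)
  refine span_le.2 ?_
  rintro _ ⟨p, hp, q, hq, rfl⟩
  exact mem_orthogonal_singleton_iff_inner_right.2 <|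
    EuclideanGeometry.inner_vsub_vsub_of_dist_eq_of_dist_eq
      ((h₁ hq).trans (h₁ hp).symm) ((h₂ hq).trans (h₂ hp).symm)

end Orthogonality

/-- The hyperboloid `(b - τ)² = r² + ‖x - v‖²` of events `(b, x)` whose position `x` lies in the
affine subspace through `v` with direction `W`. It has two sheets if `r ≠ 0` and is the light cone
with apex `(τ, v)` if `r = 0`, reduced to that apex if moreover `W = ⊥`. For `W = U⊥` it is the
null polar of events at time `τ` whose positions span a translate of `U` through `v` and lie on
the sphere of radius `r` around `v`. -/
def nullHyperboloid (W : Submodule ℝ V) (v : P) (τ r : ℝ) : Set (ℝ × P) :=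
  {p | p.2 -ᵥ v ∈ W ∧ (p.1 - τ) ^ 2 = r ^ 2 + dist p.2 v ^ 2}

section NullHyperboloid

variable {W : Submodule ℝ V} {v : P} {τ r : ℝ}

theorem add_sqrt_mem_nullHyperboloid {x : P} (hx : x -ᵥ v ∈ W) :
    (τ + √(r ^ 2 + dist x v ^ 2), x) ∈ nullHyperboloid W v τ r :=
  ⟨hx, by rw [add_sub_cancel_left, Real.sq_sqrt (by positivity)]⟩

theorem snd_image_nullHyperboloid :
    Prod.snd '' nullHyperboloid W v τ r = {x | x -ᵥ v ∈ W} := by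
  ext x
  constructor
  · rintro ⟨p, hp, rfl⟩
    exact hp.1
  · exact fun hx ↦ ⟨_, add_sqrt_mem_nullHyperboloid hx, rfl⟩

theorem two_mul_sub_fst_mem_nullHyperboloid {p : ℝ × P} (hp : p ∈ nullHyperboloid W v τ r) :
    (2 * τ - p.1, p.2) ∈ nullHyperboloid W v τ r :=
  ⟨hp.1, by linear_combination hp.2⟩

theorem sub_mul_sub_eq_zero_of_mem_nullPolar_nullHyperboloid {p q : ℝ × P}
    (hq : q ∈ nullPolar (nullHyperboloid W v τ r)) (hp : p ∈ nullHyperboloid W v τ r) :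
    (q.1 - τ) * (p.1 - τ) = 0 := by
  linear_combination (hq p hp - hq _ (two_mul_sub_fst_mem_nullHyperboloid hp)) / 4

theorem fst_eq_of_mem_nullPolar_nullHyperboloid (hW : r = 0 → W = ⊤) {q : ℝ × P}
    (hq : q ∈ nullPolar (nullHyperboloid W v τ r)) : q.1 = τ := by
  by_contra hne
  have sq_add_dist_sq_eq_zero {x : P} (hx : x -ᵥ v ∈ W) : r ^ 2 + dist x v ^ 2 = 0 := by
    have hx' := add_sqrt_mem_nullHyperboloid (τ := τ) (r := r) hx
    have hmul := sub_mul_sub_eq_zero_of_mem_nullPolar_nullHyperboloid hq hx'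
    rw [← hx'.2, (mul_eq_zero.1 hmul).resolve_left (sub_ne_zero.2 hne), zero_pow two_ne_zero]
  have hr : r = 0 := by simpa using sq_add_dist_sq_eq_zero (x := v) (by simp)
  have hqv : q.2 = v := by simpa [hr] using sq_add_dist_sq_eq_zero (x := q.2) (by simp [hW hr])
  have hv : (τ, v) ∈ nullHyperboloid W v τ r := by simp [nullHyperboloid, hr]
  have hapex : (q.1 - τ) ^ 2 = 0 := by simpa [hqv] using (hq _ hv).symm
  exact hne <| sub_eq_zero.1 <| sq_eq_zero_iff.1 hapex

theorem nullPolar_nullHyperboloid (hr : 0 ≤ r) (hW : r = 0 → W = ⊤) :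
    nullPolar (nullHyperboloid W v τ r) = {τ} ×ˢ {q | q -ᵥ v ∈ Wᗮ ∧ dist q v = r} := by
  ext ⟨a, q⟩
  constructor
  · intro hq
    obtain rfl : a = τ := fst_eq_of_mem_nullPolar_nullHyperboloid hW hq
    have hquad {x : P} (hx : x -ᵥ v ∈ W) : dist q v ^ 2 - 2 * ⟪q -ᵥ v, x -ᵥ v⟫ = r ^ 2 := by
      have hx' := add_sqrt_mem_nullHyperboloid (τ := a) (r := r) hx
      linear_combination hq _ hx' + hx'.2 -
        dist_sq_eq_dist_sq_add_dist_sq_sub_two_mul_inner q x v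
    have hdist : dist q v = r := by
      rw [← sq_eq_sq₀ dist_nonneg hr]
      simpa using hquad (x := v) (by simp)
    refine ⟨rfl, (mem_orthogonal' _ _).2 fun y hy ↦ ?_, hdist⟩
    have hy' := hquad (x := y +ᵥ v) (by simpa using hy)
    rw [vadd_vsub, hdist] at hy'
    linarith
  · rintro ⟨rfl, hqW, hqr⟩ p ⟨hpW, hp⟩
    rw [dist_comm, dist_sq_eq_dist_sq_add_dist_sq_of_mem_orthogonal hpW hqW, hqr]
    linear_combination -hp

theorem nullHyperboloid_eq_setOf_sqrt (W : Submodule ℝ V) (v : V) (τ r : ℝ) :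
    nullHyperboloid W v τ r = {p | ∃ y ∈ W, p.2 = v + y ∧
      (p.1 = τ + √(r ^ 2 + ‖y‖ ^ 2) ∨ p.1 = τ - √(r ^ 2 + ‖y‖ ^ 2))} := by
  have sq_sub_eq_iff (b : ℝ) (y : V) : (b - τ) ^ 2 = r ^ 2 + ‖y‖ ^ 2 ↔
      b = τ + √(r ^ 2 + ‖y‖ ^ 2) ∨ b = τ - √(r ^ 2 + ‖y‖ ^ 2) := by
    calc (b - τ) ^ 2 = r ^ 2 + ‖y‖ ^ 2
      _ ↔ (b - τ) ^ 2 = √(r ^ 2 + ‖y‖ ^ 2) ^ 2 := by rw [Real.sq_sqrt (by positivity)]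
      _ ↔ b = τ + √(r ^ 2 + ‖y‖ ^ 2) ∨ b = τ - √(r ^ 2 + ‖y‖ ^ 2) := by
        rw [sq_eq_sq_iff_eq_or_eq_neg, sub_eq_iff_eq_add', sub_eq_iff_eq_add', ← sub_eq_add_neg]
  ext ⟨b, x⟩
  simp only [nullHyperboloid, mem_ofPred_eq, vsub_eq_sub, dist_eq_norm, ← sq_sub_eq_iff]
  constructor
  · exact fun ⟨hx, hb⟩ ↦ ⟨x - v, hx, (add_sub_cancel v x).symm, hb⟩
  · rintro ⟨y, hy, rfl, hb⟩
    simpa only [add_sub_cancel_left] using ⟨hy, hb⟩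

end NullHyperboloid

section Simultaneous

variable {A : Set P} {v : P} {r : ℝ}

theorem nullPolar_singleton_prod (hA : A.Nonempty) (hv : v ∈ affineSpan ℝ A)
    (hAr : A ⊆ sphere v r) (τ : ℝ) :
    nullPolar ({τ} ×ˢ A) = nullHyperboloid (vectorSpan ℝ A)ᗮ v τ r := by
  have pythagoras {p x : P} (hp : p ∈ A) (hx : x -ᵥ v ∈ (vectorSpan ℝ A)ᗮ) :
      dist x p ^ 2 = r ^ 2 + dist x v ^ 2 := by
    have hpv : p -ᵥ v ∈ vectorSpan ℝ A := by
      rw [← direction_affineSpan]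
      exact AffineSubspace.vsub_mem_direction (mem_affineSpan ℝ hp) hv
    rw [dist_comm x p, dist_sq_eq_dist_sq_add_dist_sq_of_mem_orthogonal hpv hx,
      mem_sphere.1 (hAr hp)]
  ext ⟨b, x⟩
  rw [mem_nullPolar_singleton_prod]
  constructor
  · intro h
    have hAx : A ⊆ sphere x |b - τ| := fun p hp ↦ by
      rw [mem_sphere', ← abs_of_nonneg (dist_nonneg (x := x) (y := p))]
      exact (sq_eq_sq_iff_abs_eq_abs _ _).1 (h p hp)
    have hx := vsub_mem_orthogonal_vectorSpan_of_subset_sphere hAr hAx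
    obtain ⟨p, hp⟩ := hA
    exact ⟨hx, (h p hp).symm.trans (pythagoras hp hx)⟩
  · exact fun ⟨hx, hb⟩ p hp ↦ (pythagoras hp hx).trans hb.symm

theorem nullPolar_nullPolar_singleton_prod [(vectorSpan ℝ A).HasOrthogonalProjection]
    (hA : A.Nonempty) (hv : v ∈ affineSpan ℝ A) (hAr : A ⊆ sphere v r) (τ : ℝ) :
    nullPolar (nullPolar ({τ} ×ˢ A)) = {τ} ×ˢ (↑(affineSpan ℝ A) ∩ sphere v r) := by
  have hr : 0 ≤ r := by
    obtain ⟨p, hp⟩ := hA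
    exact dist_nonneg.trans_eq (hAr hp)
  have hperp : r = 0 → (vectorSpan ℝ A)ᗮ = ⊤ := by
    rintro rfl
    rw [sphere_zero] at hAr
    rw [vectorSpan_of_subsingleton ℝ (subsingleton_singleton.anti hAr), bot_orthogonal_eq_top]
  rw [nullPolar_singleton_prod hA hv hAr, nullPolar_nullHyperboloid hr hperp,
    orthogonal_orthogonal]
  ext ⟨a, q⟩
  rw [Set.mem_prod, Set.mem_prod, mem_inter_iff, SetLike.mem_coe,
    ← AffineSubspace.vsub_right_mem_direction_iff_mem hv, direction_affineSpan]
  rfl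

end Simultaneous

theorem norm_sub_sq_of_two_mul_inner_sub_eq {x v : V} {β τ : ℝ}
    (h : 2 * ⟪x, v⟫ - β = ‖x‖ ^ 2 - τ ^ 2) : ‖x - v‖ ^ 2 = ‖v‖ ^ 2 - β + τ ^ 2 := by
  rw [norm_sub_sq_real]
  linear_combination -h

theorem stmt_18_general {ι E : Type*} [Nonempty ι] [NormedAddCommGroup E] [InnerProductSpace ℝ E]
    (s : ι → E) [(vectorSpan ℝ (range s)).HasOrthogonalProjection] (t : ι → ℝ) (v : E) (β : ℝ)
    (hv : v ∈ affineSpan ℝ (range s))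
    (hβ : ∀ i, 2 * ⟪s i, v⟫ - β = ‖s i‖ ^ 2 - t i ^ 2)
    (τ : ℝ) (hτ : ∀ i, t i = τ) (r : ℝ) (hr : r = √(‖v‖ ^ 2 - β + τ ^ 2))
    (X : Set (ℝ × E)) (hX : X = {p | ∀ i, ‖s i - p.2‖ ^ 2 = (t i - p.1) ^ 2})
    (S : Set (ℝ × E)) (hS : S = {q | ∀ p ∈ X, ‖q.2 - p.2‖ ^ 2 = (q.1 - p.1) ^ 2})
    (Qsol : Set E) (hQsol : Qsol = {x | ∃ b : ℝ, (b, x) ∈ X})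
    (Qsat : Set E) (hQsat : Qsat = {x | ∃ a : ℝ, (a, x) ∈ S}) :
    0 ≤ ‖v‖ ^ 2 - β + τ ^ 2 ∧
    (∀ i, ‖s i - v‖ = r) ∧
    X = {p | ∃ y ∈ (vectorSpan ℝ (range s))ᗮ, p.2 = v + y ∧
      (p.1 = τ + √(r ^ 2 + ‖y‖ ^ 2) ∨ p.1 = τ - √(r ^ 2 + ‖y‖ ^ 2))} ∧
    Qsol = {x | ∃ y ∈ (vectorSpan ℝ (range s))ᗮ, x = v + y} ∧
    S = {q | q.1 = τ ∧ q.2 ∈ affineSpan ℝ (range s) ∧ ‖q.2 - v‖ = r} ∧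
    Qsat = {x | x ∈ affineSpan ℝ (range s) ∧ ‖x - v‖ = r} := by
  obtain rfl : t = fun _ ↦ τ := funext hτ
  have hsq i : ‖s i - v‖ ^ 2 = ‖v‖ ^ 2 - β + τ ^ 2 := norm_sub_sq_of_two_mul_inner_sub_eq (hβ i)
  have hsr i : ‖s i - v‖ = r := by rw [hr, ← hsq i, Real.sqrt_sq (norm_nonneg _)]
  have hsphere : range s ⊆ sphere v r := range_subset_iff.2 fun i ↦ mem_sphere_iff_norm.2 (hsr i)
  have hXpolar : X = nullPolar ({τ} ×ˢ range s) := by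
    ext p
    simp only [hX, mem_nullPolar_singleton_prod, forall_mem_range, mem_ofPred_eq, dist_eq_norm,
      norm_sub_rev p.2, sub_sq_comm p.1]
  have hXhyp := hXpolar.trans (nullPolar_singleton_prod (range_nonempty s) hv hsphere τ)
  have hSpolar : S = nullPolar X := by simp only [hS, nullPolar, dist_eq_norm]
  have hSsphere : S = {τ} ×ˢ (↑(affineSpan ℝ (range s)) ∩ sphere v r) := by
    rw [hSpolar, hXpolar, nullPolar_nullPolar_singleton_prod (range_nonempty s) hv hsphere]
  have hSeq : S = {q | q.1 = τ ∧ q.2 ∈ affineSpan ℝ (range s) ∧ ‖q.2 - v‖ = r} := by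
    ext q
    rw [hSsphere, Set.mem_prod, mem_inter_iff, mem_sphere_iff_norm]
    rfl
  refine ⟨(sq_nonneg _).trans_eq (hsq (Classical.arbitrary ι)), hsr,
    hXhyp.trans (nullHyperboloid_eq_setOf_sqrt _ v τ r), ?_, hSeq, ?_⟩
  · have himage : Qsol = Prod.snd '' X := by ext; simp [hQsol]
    rw [himage, hXhyp, snd_image_nullHyperboloid]
    ext x
    simp [← sub_eq_iff_eq_add']
  · simp [hQsat, hSeq]

theorem stmt_18 {n m : ℕ} [NeZero m] (hn : 1 ≤ n) (hm : m ≤ n + 1)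
    (hm2 : 2 ≤ m)
    (s : Fin m → EuclideanSpace ℝ (Fin n)) (t : Fin m → ℝ)
    (hindep : AffineIndependent ℝ s)
    (v : EuclideanSpace ℝ (Fin n)) (β : ℝ)
    (hv : v ∈ affineSpan ℝ (Set.range s))
    (hβ : ∀ i, 2 * ⟪s i, v⟫ - β = ‖s i‖ ^ 2 - t i ^ 2)
    (τ : ℝ) (hτ : ∀ i, t i = τ)
    (r : ℝ) (hr : r = Real.sqrt (‖v‖ ^ 2 - β + τ ^ 2))
    (X : Set (ℝ × EuclideanSpace ℝ (Fin n)))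
    (hX : X = {p : ℝ × EuclideanSpace ℝ (Fin n) | ∀ i, ‖s i - p.2‖ ^ 2 = (t i - p.1) ^ 2})
    (S : Set (ℝ × EuclideanSpace ℝ (Fin n)))
    (hS : S = {q : ℝ × EuclideanSpace ℝ (Fin n) | ∀ p ∈ X, ‖q.2 - p.2‖ ^ 2 = (q.1 - p.1) ^ 2})
    (Qsol : Set (EuclideanSpace ℝ (Fin n)))
    (hQsol : Qsol = {x : EuclideanSpace ℝ (Fin n) | ∃ b : ℝ, (b, x) ∈ X})
    (Qsat : Set (EuclideanSpace ℝ (Fin n)))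
    (hQsat : Qsat = {x : EuclideanSpace ℝ (Fin n) | ∃ τ : ℝ, (τ, x) ∈ S}) :
    0 ≤ ‖v‖ ^ 2 - β + τ ^ 2 ∧
    (∀ i, ‖s i - v‖ = r) ∧
    X = {p : ℝ × EuclideanSpace ℝ (Fin n) | ∃ y : EuclideanSpace ℝ (Fin n),
        y ∈ (Submodule.span ℝ (Set.range fun i => s i - s 0))ᗮ ∧
        p.2 = v + y ∧
        (p.1 = τ + Real.sqrt (r ^ 2 + ‖y‖ ^ 2) ∨
         p.1 = τ - Real.sqrt (r ^ 2 + ‖y‖ ^ 2))} ∧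
    Qsol = {x : EuclideanSpace ℝ (Fin n) |
        ∃ y ∈ (Submodule.span ℝ (Set.range fun i => s i - s 0))ᗮ, x = v + y} ∧
    S = {q : ℝ × EuclideanSpace ℝ (Fin n) | q.1 = τ ∧ q.2 ∈ affineSpan ℝ (Set.range s) ∧
        ‖q.2 - v‖ = r} ∧
    Qsat = {x : EuclideanSpace ℝ (Fin n) | x ∈ affineSpan ℝ (Set.range s) ∧ ‖x - v‖ = r} := by
  simpa only [vectorSpan_range_eq_span_range_vsub_right ℝ s 0, vsub_eq_sub] using
    stmt_18_general s t v β hv hβ τ hτ r hr X hX S hS Qsol hQsol Qsat hQsat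
end
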